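/- Let σ and w be Radon measures on ℝ whose Muckenhoupt–Poisson constants [σ,w]_{A₂}* and [w,σ]_{A₂}* are finite, and suppose that sup_{ε>0} |B_ε(1_I, 1_I)| < ∞ for every finite interval I. Then for all f, g ∈ 𝓕 the function ε ↦ B_ε(f,g) is bounded on (0,∞). -/

import Mathlib

/-!
Since `B_ε` is bilinear on `𝓕` (for fixed `ε > 0` the truncated kernel is bounded by `1/ε`, so
everything is absolutely integrable on the product), it suffices to bound `B_ε(1_I, 1_J)` for
half-open intervals. Writing `1_[a,b) = 1_[m,b) - 1_[m,a)` with `m` to the left of all endpoints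
involved, one may take `I = [m,a)` and `J = [m,b)`. Splitting the longer one at the right endpoint
of the shorter leaves a diagonal term, which is bounded by hypothesis, and a term with two
adjacent intervals `[m,b)`, `[b,c)`.

For adjacent intervals the untruncated kernel `1/|x-y|` is already integrable
(`integrable_adjacent`). Testing the Muckenhoupt–Poisson condition on `(b-r,b)` gives
`μ(b-r,b) ν[b,b+r) ≤ (9/4) A² r²` (`A2star.mul_le`). As `1/(y-x) > t` forces
`x ∈ (b-1/t,b)` and `y ∈ [b,b+1/t)`, the distribution function of the kernel is `O(t⁻²)` for
large `t`; it is bounded by the finite total mass for small `t`, so the layer-cake formula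
gives a finite integral.
-/

open MeasureTheory Set
open scoped ENNReal

noncomputable section

/-- `𝓕`: finite linear combinations of indicator functions of finite half-open intervals. -/
def InF (f : ℝ → ℝ) : Prop :=
  f ∈ Submodule.span ℝ {g : ℝ → ℝ | ∃ a b : ℝ, g = (Set.Ico a b).indicator 1}

/-- The truncated Hilbert pairing
`B_ε(f,g) = ∬_{|x-y|>ε} (x-y)⁻¹ f(y) g(x) dσ(y) dw(x)`. -/
def truncPairing (σ w : Measure ℝ) (f g : ℝ → ℝ) (ε : ℝ) : ℝ :=
  ∫ x, (∫ y, (if ε < |x - y| then (x - y)⁻¹ * f y else 0) ∂σ) * g x ∂w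

/-- The Muckenhoupt–Poisson `A₂` condition `[σ,w]_{A₂}* ≤ A`: for every finite interval `I`
with center `c_I`, `σ(I) ∫_{Iᶜ} (x - c_I)⁻² dw(x) ≤ A²`. -/
def A2star (σ w : Measure ℝ) (A : ℝ) : Prop :=
  ∀ I : Set ℝ, I.OrdConnected → Bornology.IsBounded I →
    σ I * ∫⁻ x in Iᶜ, ENNReal.ofReal (((x - (sInf I + sSup I) / 2) ^ 2)⁻¹) ∂w ≤
      ENNReal.ofReal (A ^ 2)

/-! ### Integrability of the kernel on adjacent intervals -/

/-- The Muckenhoupt–Poisson condition tested on `(b-r,b)`, keeping only the part `[b,b+r)` of the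
complement: there the distance to the center `b - r/2` is at most `3r/2`, whence the factor `9/4`. -/
lemma A2star.mul_le {μ ν : Measure ℝ} {A : ℝ} (h : A2star μ ν A) (b : ℝ) {r : ℝ} (hr : 0 < r) :
    μ (Ioo (b - r) b) * ν (Ico b (b + r)) ≤ ENNReal.ofReal (9 / 4 * A ^ 2 * r ^ 2) := by
  have h1 := h (Ioo (b - r) b) ordConnected_Ioo (Metric.isBounded_Ioo _ _)
  rw [csInf_Ioo (by linarith), csSup_Ioo (by linarith)] at h1
  set k : ℝ := 4 / 9 * (r ^ 2)⁻¹ with hk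
  have hk0 : 0 < k := by positivity
  have h2 : ENNReal.ofReal k * ν (Ico b (b + r)) ≤
      ∫⁻ x in (Ioo (b - r) b)ᶜ, ENNReal.ofReal (((x - (b - r + b) / 2) ^ 2)⁻¹) ∂ν := by
    calc ENNReal.ofReal k * ν (Ico b (b + r))
        = ∫⁻ x in Ico b (b + r), ENNReal.ofReal k ∂ν := by rw [setLIntegral_const]
      _ ≤ ∫⁻ x in Ico b (b + r), ENNReal.ofReal (((x - (b - r + b) / 2) ^ 2)⁻¹) ∂ν := by
          refine setLIntegral_mono (by fun_prop) fun x hx => ENNReal.ofReal_le_ofReal ?_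
          have e : k = ((3 / 2 * r) ^ 2)⁻¹ := by rw [hk]; field_simp; norm_num
          rw [e]
          have hx1 := hx.1
          have hx2 := hx.2
          have : 0 < x - (b - r + b) / 2 := by linarith
          apply inv_anti₀ (by positivity)
          apply pow_le_pow_left₀ this.le
          linarith
      _ ≤ _ := by
          refine lintegral_mono_set ?_
          intro x hx
          rw [mem_compl_iff]
          exact fun hx' => not_lt.2 hx.1 hx'.2
  have h3 : ENNReal.ofReal k * (μ (Ioo (b - r) b) * ν (Ico b (b + r))) ≤
      ENNReal.ofReal (A ^ 2) := by
    refine le_trans ?_ h1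
    rw [mul_left_comm]
    gcongr
  calc μ (Ioo (b - r) b) * ν (Ico b (b + r))
      = ENNReal.ofReal k⁻¹ * (ENNReal.ofReal k * (μ (Ioo (b - r) b) * ν (Ico b (b + r)))) := by
        rw [← mul_assoc, ← ENNReal.ofReal_mul (by positivity), inv_mul_cancel₀ hk0.ne']
        simp
    _ ≤ ENNReal.ofReal k⁻¹ * ENNReal.ofReal (A ^ 2) := by gcongr
    _ = ENNReal.ofReal (9 / 4 * A ^ 2 * r ^ 2) := by
        rw [← ENNReal.ofReal_mul (by positivity)]
        congr 1
        rw [hk]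
        field_simp

/-- Under the Muckenhoupt–Poisson condition, `1/|x-y|` is integrable on a product of two adjacent
bounded intervals. -/
lemma integrable_adjacent {μ ν : Measure ℝ} [IsLocallyFiniteMeasure μ] [IsLocallyFiniteMeasure ν]
    {A : ℝ} (h : A2star μ ν A) (a b c : ℝ) :
    IntegrableOn (fun p : ℝ × ℝ => |p.1 - p.2|⁻¹) (Ico a b ×ˢ Ico b c) (μ.prod ν) := by
  have hmeas : Measurable (fun p : ℝ × ℝ => |p.1 - p.2|⁻¹) := by fun_prop
  have hnn : ∀ p : ℝ × ℝ, 0 ≤ |p.1 - p.2|⁻¹ := fun p => by positivity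
  refine ⟨hmeas.aestronglyMeasurable, ?_⟩
  rw [hasFiniteIntegral_iff_ofReal (Filter.Eventually.of_forall hnn),
    lintegral_eq_lintegral_meas_lt _ (Filter.Eventually.of_forall hnn) hmeas.aemeasurable,
    ← Ioc_union_Ioi_eq_Ioi (zero_le_one (α := ℝ))]
  refine (lintegral_union_le _ _ _).trans_lt (ENNReal.add_lt_top.2 ⟨?_, ?_⟩)
  · calc ∫⁻ t in Ioc (0 : ℝ) 1, ((μ.prod ν).restrict (Ico a b ×ˢ Ico b c))
          {p | t < |p.1 - p.2|⁻¹}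
        ≤ ∫⁻ _ in Ioc (0 : ℝ) 1, (μ.prod ν) (Ico a b ×ˢ Ico b c) := by
          refine lintegral_mono fun t => ?_
          exact (measure_mono (subset_univ _)).trans (by simp)
      _ < ⊤ := by
          rw [setLIntegral_const, Measure.prod_prod]
          refine ENNReal.mul_lt_top (ENNReal.mul_lt_top ?_ ?_) (by simp)
          · exact measure_Ico_lt_top
          · exact measure_Ico_lt_top
  · have hint : IntegrableOn (fun t : ℝ => 9 / 4 * A ^ 2 * t ^ (-2 : ℝ)) (Ioi 1) volume :=
      (integrableOn_Ioi_rpow_of_lt (by norm_num) one_pos).const_mul _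
    refine lt_of_le_of_lt ?_ hint.setLIntegral_lt_top
    refine setLIntegral_mono (by fun_prop) fun t ht => ?_
    have ht0 : 0 < t := one_pos.trans ht
    have hset : MeasurableSet {p : ℝ × ℝ | t < |p.1 - p.2|⁻¹} := measurableSet_lt (by fun_prop) hmeas
    rw [Measure.restrict_apply hset]
    calc (μ.prod ν) ({p : ℝ × ℝ | t < |p.1 - p.2|⁻¹} ∩ Ico a b ×ˢ Ico b c)
        ≤ (μ.prod ν) (Ioo (b - t⁻¹) b ×ˢ Ico b (b + t⁻¹)) := by
          refine measure_mono ?_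
          rintro ⟨x, y⟩ ⟨h1, h2, h3⟩
          simp only [mem_ofPred_eq, mem_Ico] at h1 h2 h3
          have hxy : |x - y| = y - x := by rw [abs_sub_comm, abs_of_pos]; linarith
          rw [hxy, lt_inv_comm₀ ht0 (by linarith)] at h1
          exact ⟨⟨by simp only; linarith, h2.2⟩, ⟨h3.1, by simp only; linarith⟩⟩
      _ ≤ ENNReal.ofReal (9 / 4 * A ^ 2 * t⁻¹ ^ 2) := by
          rw [Measure.prod_prod]
          exact h.mul_le b (inv_pos.2 ht0)
      _ = _ := by
          rw [Real.rpow_neg ht0.le, Real.rpow_two, inv_pow]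

/-! ### The pairing as an integral over the product -/

/-- The truncated Hilbert kernel. -/
def truncKernel (ε : ℝ) (p : ℝ × ℝ) : ℝ := if ε < |p.1 - p.2| then (p.1 - p.2)⁻¹ else 0

lemma measurable_truncKernel (ε : ℝ) : Measurable (truncKernel ε) :=
  Measurable.ite (measurableSet_lt (by fun_prop) (by fun_prop)) (by fun_prop) (by fun_prop)

lemma norm_truncKernel_le (ε : ℝ) (p : ℝ × ℝ) : ‖truncKernel ε p‖ ≤ |p.1 - p.2|⁻¹ := by
  unfold truncKernel
  split_ifs
  · simp
  · simp

lemma norm_truncKernel_le_inv {ε : ℝ} (hε : 0 < ε) (p : ℝ × ℝ) : ‖truncKernel ε p‖ ≤ ε⁻¹ := by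
  unfold truncKernel
  split_ifs with h
  · rw [norm_inv, Real.norm_eq_abs]
    exact inv_anti₀ hε h.le
  · simp [hε.le]

lemma InF.indicator (a b : ℝ) : InF ((Ico a b).indicator 1) :=
  Submodule.subset_span ⟨a, b, rfl⟩

lemma InF.integrable {f : ℝ → ℝ} (hf : InF f) (μ : Measure ℝ) [IsLocallyFiniteMeasure μ] :
    Integrable f μ := by
  induction hf using Submodule.span_induction with
  | mem f hf =>
    obtain ⟨a, b, rfl⟩ := hf
    rw [integrable_indicator_iff measurableSet_Ico]
    exact integrableOn_const measure_Ico_lt_top.ne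
  | zero => exact integrable_zero _ _ _
  | add f g _ _ h1 h2 => exact h1.add h2
  | smul c f _ h => exact h.smul c

lemma integrable_truncKernel_mul {σ w : Measure ℝ} [IsLocallyFiniteMeasure σ]
    [IsLocallyFiniteMeasure w] {f g : ℝ → ℝ} (hf : InF f) (hg : InF g) {ε : ℝ} (hε : 0 < ε) :
    Integrable (fun p : ℝ × ℝ => truncKernel ε p * (g p.1 * f p.2)) (w.prod σ) :=
  ((hg.integrable w).mul_prod (hf.integrable σ)).bdd_mul
    (measurable_truncKernel ε).aestronglyMeasurable
    (Filter.Eventually.of_forall (norm_truncKernel_le_inv hε))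

lemma truncPairing_eq {σ w : Measure ℝ} [IsLocallyFiniteMeasure σ]
    [IsLocallyFiniteMeasure w] {f g : ℝ → ℝ} (hf : InF f) (hg : InF g) {ε : ℝ} (hε : 0 < ε) :
    truncPairing σ w f g ε = ∫ p, truncKernel ε p * (g p.1 * f p.2) ∂(w.prod σ) := by
  rw [integral_prod _ (integrable_truncKernel_mul hf hg hε), truncPairing]
  congr 1 with x
  rw [← integral_mul_const]
  congr 1 with y
  simp only [truncKernel]
  split_ifs <;> ring

/-! ### Boundedness of the pairing -/

/-- Uniform boundedness of `ε ↦ B_ε(f,g)` on `(0,∞)`. -/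
def PairingBdd (σ w : Measure ℝ) (f g : ℝ → ℝ) : Prop :=
  ∃ M : ℝ, ∀ ε : ℝ, 0 < ε → |truncPairing σ w f g ε| ≤ M

lemma PairingBdd.zero_left {σ w : Measure ℝ} (g : ℝ → ℝ) : PairingBdd σ w 0 g :=
  ⟨0, fun ε _ => by simp [truncPairing]⟩

lemma PairingBdd.zero_right {σ w : Measure ℝ} (f : ℝ → ℝ) : PairingBdd σ w f 0 :=
  ⟨0, fun ε _ => by simp [truncPairing]⟩

section

variable {σ w : Measure ℝ} [IsLocallyFiniteMeasure σ] [IsLocallyFiniteMeasure w]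

lemma PairingBdd.add_left {f₁ f₂ g : ℝ → ℝ} (h₁ : PairingBdd σ w f₁ g)
    (h₂ : PairingBdd σ w f₂ g) (hf₁ : InF f₁) (hf₂ : InF f₂) (hg : InF g) :
    PairingBdd σ w (f₁ + f₂) g := by
  obtain ⟨M₁, h₁⟩ := h₁
  obtain ⟨M₂, h₂⟩ := h₂
  refine ⟨M₁ + M₂, fun ε hε => ?_⟩
  have : truncPairing σ w (f₁ + f₂) g ε =
      truncPairing σ w f₁ g ε + truncPairing σ w f₂ g ε := by
    rw [truncPairing_eq hf₁ hg hε, truncPairing_eq hf₂ hg hε,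
      truncPairing_eq (Submodule.add_mem _ hf₁ hf₂) hg hε,
      ← integral_add (integrable_truncKernel_mul hf₁ hg hε)
        (integrable_truncKernel_mul hf₂ hg hε)]
    congr 1 with p
    simp only [Pi.add_apply]
    ring
  rw [this]
  exact (abs_add_le _ _).trans (add_le_add (h₁ ε hε) (h₂ ε hε))

lemma PairingBdd.add_right {f g₁ g₂ : ℝ → ℝ} (h₁ : PairingBdd σ w f g₁)
    (h₂ : PairingBdd σ w f g₂) (hf : InF f) (hg₁ : InF g₁) (hg₂ : InF g₂) :
    PairingBdd σ w f (g₁ + g₂) := by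
  obtain ⟨M₁, h₁⟩ := h₁
  obtain ⟨M₂, h₂⟩ := h₂
  refine ⟨M₁ + M₂, fun ε hε => ?_⟩
  have : truncPairing σ w f (g₁ + g₂) ε =
      truncPairing σ w f g₁ ε + truncPairing σ w f g₂ ε := by
    rw [truncPairing_eq hf hg₁ hε, truncPairing_eq hf hg₂ hε,
      truncPairing_eq hf (Submodule.add_mem _ hg₁ hg₂) hε,
      ← integral_add (integrable_truncKernel_mul hf hg₁ hε)
        (integrable_truncKernel_mul hf hg₂ hε)]
    congr 1 with p
    simp only [Pi.add_apply]
    ring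
  rw [this]
  exact (abs_add_le _ _).trans (add_le_add (h₁ ε hε) (h₂ ε hε))

lemma PairingBdd.smul_left {f g : ℝ → ℝ} (c : ℝ) (h : PairingBdd σ w f g)
    (hf : InF f) (hg : InF g) : PairingBdd σ w (c • f) g := by
  obtain ⟨M, h⟩ := h
  refine ⟨|c| * M, fun ε hε => ?_⟩
  have : truncPairing σ w (c • f) g ε = c * truncPairing σ w f g ε := by
    rw [truncPairing_eq hf hg hε, truncPairing_eq (Submodule.smul_mem _ c hf) hg hε,
      ← integral_const_mul]
    congr 1 with p
    simp only [Pi.smul_apply, smul_eq_mul]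
    ring
  rw [this, abs_mul]
  exact mul_le_mul_of_nonneg_left (h ε hε) (abs_nonneg c)

lemma PairingBdd.smul_right {f g : ℝ → ℝ} (c : ℝ) (h : PairingBdd σ w f g)
    (hf : InF f) (hg : InF g) : PairingBdd σ w f (c • g) := by
  obtain ⟨M, h⟩ := h
  refine ⟨|c| * M, fun ε hε => ?_⟩
  have : truncPairing σ w f (c • g) ε = c * truncPairing σ w f g ε := by
    rw [truncPairing_eq hf hg hε, truncPairing_eq hf (Submodule.smul_mem _ c hg) hε,
      ← integral_const_mul]
    congr 1 with p
    simp only [Pi.smul_apply, smul_eq_mul]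
    ring
  rw [this, abs_mul]
  exact mul_le_mul_of_nonneg_left (h ε hε) (abs_nonneg c)

/-- If the untruncated kernel is absolutely integrable on `J × I`, then it dominates all
truncations, so `B_ε(1_I, 1_J)` is bounded. -/
lemma PairingBdd.of_integrableOn {a b c d : ℝ}
    (h : IntegrableOn (fun p : ℝ × ℝ => |p.1 - p.2|⁻¹) (Ico c d ×ˢ Ico a b) (w.prod σ)) :
    PairingBdd σ w ((Ico a b).indicator 1) ((Ico c d).indicator 1) := by
  rw [← integrable_indicator_iff (measurableSet_Ico.prod measurableSet_Ico)] at h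
  refine ⟨∫ p, (Ico c d ×ˢ Ico a b).indicator (fun p : ℝ × ℝ => |p.1 - p.2|⁻¹) p ∂(w.prod σ),
    fun ε hε => ?_⟩
  rw [truncPairing_eq (InF.indicator a b) (InF.indicator c d) hε, ← Real.norm_eq_abs]
  refine norm_integral_le_of_norm_le h (Filter.Eventually.of_forall fun p => ?_)
  by_cases h1 : p.1 ∈ Ico c d <;> by_cases h2 : p.2 ∈ Ico a b
  · rw [indicator_of_mem h1, indicator_of_mem h2, indicator_of_mem (mk_mem_prod h1 h2)]
    simpa using norm_truncKernel_le ε p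
  all_goals
    have hp : p ∉ Ico c d ×ˢ Ico a b := fun hp => by
      first | exact h1 hp.1 | exact h2 hp.2
    rw [indicator_of_notMem hp]
    simp [h1, h2]

lemma indicator_Ico_split {m a b : ℝ} (h₁ : m ≤ a) (h₂ : a ≤ b) :
    (Ico m b).indicator (1 : ℝ → ℝ) = (Ico m a).indicator 1 + (Ico a b).indicator 1 := by
  rw [← Ico_union_Ico_eq_Ico h₁ h₂, indicator_union_of_disjoint]
  · rfl
  · exact Ico_disjoint_Ico_same

/-- Boundedness for two intervals with a common left endpoint: a diagonal term plus a term with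
adjacent intervals. -/
lemma PairingBdd.common_left {A A' : ℝ} (hA : A2star σ w A) (hA' : A2star w σ A')
    (hWBP : ∀ a b : ℝ, a < b → PairingBdd σ w ((Ico a b).indicator 1) ((Ico a b).indicator 1))
    {m a b : ℝ} (ha : m ≤ a) (hb : m ≤ b) :
    PairingBdd σ w ((Ico m a).indicator 1) ((Ico m b).indicator 1) := by
  have hdiag : ∀ c, m ≤ c →
      PairingBdd σ w ((Ico m c).indicator 1) ((Ico m c).indicator 1) := by
    intro c hc
    rcases hc.eq_or_lt with rfl | hc
    · rw [Ico_self, indicator_empty]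
      exact .zero_left _
    · exact hWBP m c hc
  rcases le_total a b with hab | hab
  · rw [indicator_Ico_split ha hab]
    refine (hdiag a ha).add_right (.of_integrableOn ?_) (.indicator _ _) (.indicator _ _)
      (.indicator _ _)
    have h := integrable_adjacent hA m a b
    rw [IntegrableOn, ← Measure.prod_restrict] at h ⊢
    refine h.swap.congr (Filter.Eventually.of_forall fun p => ?_)
    simp [abs_sub_comm]
  · rw [indicator_Ico_split hb hab]
    exact (hdiag b hb).add_left (.of_integrableOn (integrable_adjacent hA' m b a))
      (.indicator _ _) (.indicator _ _) (.indicator _ _)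

lemma indicator_Ico_eq_diff {m a b : ℝ} (h₁ : m ≤ a) (h₂ : a ≤ b) :
    (Ico a b).indicator (1 : ℝ → ℝ) =
      (Ico m b).indicator 1 + (-1 : ℝ) • (Ico m a).indicator 1 := by
  rw [indicator_Ico_split h₁ h₂]
  module

lemma PairingBdd.indicator {A A' : ℝ} (hA : A2star σ w A) (hA' : A2star w σ A')
    (hWBP : ∀ a b : ℝ, a < b → PairingBdd σ w ((Ico a b).indicator 1) ((Ico a b).indicator 1))
    (a b c d : ℝ) :
    PairingBdd σ w ((Ico a b).indicator 1) ((Ico c d).indicator 1) := by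
  rcases lt_or_ge b a with hab | hab
  · rw [Ico_eq_empty hab.not_gt, indicator_empty]
    exact .zero_left _
  rcases lt_or_ge d c with hcd | hcd
  · rw [Ico_eq_empty hcd.not_gt, indicator_empty]
    exact .zero_right _
  obtain ⟨m, hma, hmc⟩ : ∃ m, m ≤ a ∧ m ≤ c := ⟨min a c, min_le_left _ _, min_le_right _ _⟩
  have hI : ∀ s t : ℝ, InF ((Ico s t).indicator 1) := InF.indicator
  have hN : ∀ s t : ℝ, InF ((-1 : ℝ) • (Ico s t).indicator 1) :=
    fun s t => Submodule.smul_mem _ _ (hI s t)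
  have key : ∀ s, m ≤ s →
      PairingBdd σ w ((Ico m s).indicator 1) ((Ico c d).indicator 1) := by
    intro s hs
    rw [indicator_Ico_eq_diff hmc hcd]
    exact (common_left hA hA' hWBP hs (hmc.trans hcd)).add_right
      ((common_left hA hA' hWBP hs hmc).smul_right _ (hI _ _) (hI _ _)) (hI _ _) (hI _ _) (hN _ _)
  rw [indicator_Ico_eq_diff hma hab]
  exact (key b (hma.trans hab)).add_left ((key a hma).smul_left _ (hI _ _) (hI _ _))
    (hI _ _) (hN _ _) (hI _ _)

end

theorem statement8 (σ w : Measure ℝ) [IsLocallyFiniteMeasure σ] [IsLocallyFiniteMeasure w]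
    (A A' : ℝ) (hA : A2star σ w A) (hA' : A2star w σ A')
    -- `sup_{ε>0} |B_ε(1_I, 1_I)| < ∞` for every finite interval `I`:
    (hWBP : ∀ a b : ℝ, a < b → ∃ M : ℝ, ∀ ε : ℝ, 0 < ε →
      |truncPairing σ w ((Set.Ico a b).indicator 1) ((Set.Ico a b).indicator 1) ε| ≤ M)
    (f g : ℝ → ℝ) (hf : InF f) (hg : InF g) :
    ∃ M : ℝ, ∀ ε : ℝ, 0 < ε → |truncPairing σ w f g ε| ≤ M := by
  change PairingBdd σ w f g
  induction hf using Submodule.span_induction with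
  | zero => exact .zero_left g
  | add f₁ f₂ hf₁ hf₂ h₁ h₂ => exact h₁.add_left h₂ hf₁ hf₂ hg
  | smul c f hf h => exact h.smul_left c hf hg
  | mem f hf =>
    obtain ⟨a, b, rfl⟩ := hf
    induction hg using Submodule.span_induction with
    | zero => exact .zero_right _
    | add g₁ g₂ hg₁ hg₂ h₁ h₂ => exact h₁.add_right h₂ (.indicator a b) hg₁ hg₂
    | smul c g hg h => exact h.smul_right c (.indicator a b) hg
    | mem g hg =>
      obtain ⟨c, d, rfl⟩ := hg
      exact .indicator hA hA' hWBP a b c d
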